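/- Let p be a prime with p > 3 and let G be a finite p-group of order p^n. If G has a non-linear irreducible complex character χ that vanishes at exactly p^n − p^(n−1) + p^2 − p elements of G, then |G| ≤ p^(r+1), where r is the smallest prime that does not divide p − 1. -/

import Mathlib

open CategoryTheory

/-!
The number of zeros of `χ` is divisible by `|Z(χ)|` but not by `p ^ 2` once `n ≥ 3`, so
`Z(χ) = Z(G)` has order `p` and `χ` is faithful. An element `g` vanishes as soon as some commutator
`⁅h, g⁆` is central and nontrivial. Hence, for `x` in `Z₂(G) \ Z(G)`, all elements outside
`C = C_G(x)` vanish, as do those in `(Z(C) ∩ Z₂(G)) \ Z(G)`. Counting shows that there are no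
others and that `C` has index `p`; it follows that `C` is commutative.

Now `V` is a sum of `p` one-dimensional representations of `C`, permuted cyclically by an element
`g ∉ C`: an `a ∈ C` acts by the weights `i ↦ l (gⁱ a g⁻ⁱ)` for `i : ZMod p`. In terms of the weights
the map `a ↦ ⁅g, a⁆` is the forward difference `Δ`, and its kernel on `C` is `Z(G)`, of order `p`.
If `|C| > p ^ r`, some `a ∈ C` satisfies `Δ ^ (r + 1) = 0 ≠ Δ ^ r`, and this forces the weights to
realise, up to a constant, every function `ζ ^ f` with `Δ ^ (r + 1) f = 0`. Take `f i = i ^ r`. It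
permutes `ZMod p` when `r` is coprime to `p - 1`, so that `χ` vanishes at the corresponding element,
which is not in `Z₂(G)` since `Δ ^ 2 f ≠ 0`. This contradicts the description of the zeros.
-/

lemma sq_not_dvd_pow_sub_pow_add_sq_sub {p n : ℕ} (hp : p.Prime) (hn : 3 ≤ n) :
    ¬ p ^ 2 ∣ p ^ n - p ^ (n - 1) + p ^ 2 - p := by
  intro h
  have sq_dvd : p ^ 2 ∣ p ^ n - p ^ (n - 1) + p ^ 2 :=
    dvd_add (Nat.dvd_sub (pow_dvd_pow p (by lia)) (pow_dvd_pow p (by lia))) dvd_rfl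
  have sq_dvd_self : p ^ 2 ∣ p ^ 1 := by
    rw [pow_one]
    exact (Nat.dvd_sub_iff_right ((Nat.le_self_pow two_ne_zero p).trans le_add_self) sq_dvd).mp h
  exact absurd ((Nat.pow_dvd_pow_iff_le_right hp.one_lt).mp sq_dvd_self) (by lia)

lemma lt_of_forall_prime_not_dvd_sub_one_le {p r : ℕ} (hp : 3 < p)
    (hr : ∀ q : ℕ, q.Prime → ¬ q ∣ p - 1 → r ≤ q) : r < p := by
  have minFac_prime : (p - 2).minFac.Prime := Nat.minFac_prime (by lia)
  have minFac_not_dvd : ¬ (p - 2).minFac ∣ p - 1 := fun h ↦ minFac_prime.not_dvd_one <| by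
    simpa [show p - 1 - (p - 2) = 1 by lia] using Nat.dvd_sub h (Nat.minFac_dvd (p - 2))
  have := (hr _ minFac_prime minFac_not_dvd).trans (Nat.minFac_le (by lia))
  lia

lemma bijective_pow_of_coprime {F : Type*} [Field F] [Finite F] {r : ℕ} (hr0 : r ≠ 0)
    (hr : r.Coprime (Nat.card F - 1)) : Function.Bijective fun a : F ↦ a ^ r := by
  refine Finite.injective_iff_bijective.mp fun a b (hab : a ^ r = b ^ r) ↦ ?_
  obtain rfl | ha := eq_or_ne a 0
  · rw [zero_pow hr0] at hab
    exact (eq_zero_of_pow_eq_zero hab.symm).symm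
  obtain rfl | hb := eq_or_ne b 0
  · rw [zero_pow hr0] at hab
    exact eq_zero_of_pow_eq_zero hab
  have hcard : (Nat.card Fˣ).Coprime r := by rw [Nat.card_units]; exact hr.symm
  exact congrArg Units.val ((powCoprime hcard).injective (a₁ := Units.mk0 a ha)
    (a₂ := Units.mk0 b hb) (Units.ext hab))

lemma mem_range_zmodChar {k : Type*} [Field k] {p : ℕ} [NeZero p] {ζ : kˣ}
    (hζ : IsPrimitiveRoot ζ p) {m : Additive kˣ} (hm : p • m = 0) :
    m ∈ (AddChar.zmodChar p hζ.pow_eq_one).toAddMonoidHom.range := by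
  obtain ⟨j, -, hj⟩ := (IsPrimitiveRoot.coe_units_iff.mpr hζ).eq_pow_of_pow_eq_one
    (ξ := (m.toMul : k)) (congrArg (fun u : Additive kˣ ↦ (u.toMul : k)) hm)
  exact ⟨j, congrArg Additive.ofMul
    ((AddChar.zmodChar_apply' hζ.pow_eq_one j).trans (Units.ext hj))⟩

lemma zmodChar_injective {M : Type*} [CommMonoid M] {p : ℕ} [NeZero p] {ζ : M}
    (hζ : IsPrimitiveRoot ζ p) : Function.Injective (AddChar.zmodChar p hζ.pow_eq_one) :=
  fun i j hij ↦ ZMod.val_injective p (hζ.pow_inj i.val_lt j.val_lt hij)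

lemma sum_zmodChar_pow_eq_zero {k : Type*} [Field k] {p r : ℕ} [Fact p.Prime] (hr0 : r ≠ 0)
    (hr : r.Coprime (p - 1)) {ζ : k} (hζ : IsPrimitiveRoot ζ p) :
    ∑ i : ZMod p, AddChar.zmodChar p hζ.pow_eq_one (i ^ r) = 0 := by
  have pow_bijective : Function.Bijective fun i : ZMod p ↦ i ^ r :=
    bijective_pow_of_coprime hr0 (by rwa [Nat.card_zmod])
  rw [pow_bijective.sum_comp (AddChar.zmodChar p hζ.pow_eq_one)]
  refine AddChar.sum_eq_zero_of_ne_one fun h ↦ one_ne_zero (α := ZMod p) ?_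
  exact zmodChar_injective hζ (by simp [h])

lemma mem_of_pow_apply_eq_zero {R M : Type*} [Ring R] [AddCommGroup M] [Module R M]
    {T : Module.End R M} {S : Submodule R M} (hS : S ≤ S.comap T) {v : M} (hv : v ∈ S) {r : ℕ}
    (hker : LinearMap.ker T ≤ Submodule.span R {(T ^ r) v}) {d : ℕ} (hd : d ≤ r + 1) {u : M}
    (hu : (T ^ d) u = 0) : u ∈ S := by
  induction d generalizing u with
  | zero => simp_all
  | succ d ih =>
    obtain ⟨c, hc⟩ := Submodule.mem_span_singleton.mp
      (hker (x := (T ^ d) u) (by rwa [LinearMap.mem_ker, ← Module.End.mul_apply, ← pow_succ']))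
    have pow_v_mem : (T ^ (r - d)) v ∈ S :=
      Module.End.pow_apply_mem_of_forall_mem _ hS v hv
    have sub_mem : u - c • (T ^ (r - d)) v ∈ S := by
      refine ih (by lia) ?_
      rw [map_sub, map_smul, ← Module.End.mul_apply, ← pow_add, Nat.add_sub_cancel' (by lia), hc,
        sub_self]
    simpa using S.add_mem sub_mem (S.smul_mem c pow_v_mem)

section ForwardDifference

open scoped fwdDiff
open fwdDiff_aux

lemma fwdDiff_iter_addMonoidHom_comp {A M N : Type*} [AddCommMonoid A] [AddCommGroup M]
    [AddCommGroup N] (h : A) (e : M →+ N) (f : A → M) (k : ℕ) :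
    (fwdDiff h)^[k] (e ∘ f) = e ∘ (fwdDiff h)^[k] f := by
  induction k generalizing f with
  | zero => rfl
  | succ k ih =>
    have fwdDiff_comp : Δ_[h] (e ∘ f) = e ∘ Δ_[h] f := funext fun i ↦ by simp [fwdDiff]
    rw [Function.iterate_succ_apply, Function.iterate_succ_apply, fwdDiff_comp, ih]

variable {p : ℕ} {M : Type*} [AddCommGroup M]

lemma fwdDiff_iter_succ_add_const {A : Type*} [AddCommMonoid A] (h : A) (f : A → M) (c : M)
    (k : ℕ) : (fwdDiff h)^[k + 1] (f + fun _ ↦ c) = (fwdDiff h)^[k + 1] f := by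
  rw [Function.iterate_succ_apply, fwdDiff_add, fwdDiff_const, Function.iterate_succ_apply]
  exact congrArg _ (add_zero _)

lemma sub_mem_of_fwdDiff_mem [NeZero p] {f : ZMod p → M} {B : AddSubgroup M}
    (hf : ∀ i, Δ_[1] f i ∈ B) (i : ZMod p) : f i - f 0 ∈ B := by
  suffices ∀ k : ℕ, f k - f 0 ∈ B by simpa using this i.val
  intro k
  induction k with
  | zero => simp
  | succ k ih => simpa [fwdDiff] using B.add_mem (hf k) ih

lemma eq_const_of_fwdDiff_eq_zero [NeZero p] {f : ZMod p → M} (hf : Δ_[1] f = 0) (i : ZMod p) :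
    f i = f 0 := by
  simpa [sub_eq_zero] using sub_mem_of_fwdDiff_mem (B := ⊥) (fun j ↦ by simp [hf]) i

lemma fwdDiff_iter_eq_zero_of_le {A : Type*} [AddCommMonoid A] {h : A} {f : A → M} {m k : ℕ}
    (hf : (fwdDiff h)^[m] f = 0) (hmk : m ≤ k) : (fwdDiff h)^[k] f = 0 := by
  rw [← Nat.sub_add_cancel hmk, Function.iterate_add_apply, hf, ← coe_fwdDiffₗ_pow, map_zero]

-- Newton's expansion of `f (i + p) = f i`: the inner binomial coefficients are multiples of `p`,
-- and `p • Δ ^ 2 f = 0` by induction.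
lemma nsmul_fwdDiff_eq_zero_of_iter_eq_zero (hp : p.Prime) {d : ℕ} (hd : d ≤ p) {f : ZMod p → M}
    (hf : (fwdDiff 1)^[d] f = 0) : p • Δ_[1] f = 0 := by
  induction d generalizing f with
  | zero =>
    rw [show f = 0 from hf, show Δ_[1] (0 : ZMod p → M) = 0 from fwdDiff_const _ _,
      smul_zero]
  | succ d ih =>
    have nsmul_iter {k : ℕ} (hk : 2 ≤ k) : p • (fwdDiff 1)^[k] f = 0 := by
      rw [← fwdDiff_iter_const_smul]
      refine fwdDiff_iter_eq_zero_of_le (m := 2) ?_ hk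
      rw [fwdDiff_iter_const_smul]
      exact ih (by lia) hf
    funext i
    have newton := shift_eq_sum_fwdDiff_iter (1 : ZMod p) f p i
    have higher_terms (k : ℕ) (hk : k ∈ Finset.range (p + 1)) (hk2 : k ∉ Finset.range 2) :
        p.choose k • (fwdDiff 1)^[k] f i = 0 := by
      rw [Finset.mem_range] at hk hk2
      obtain rfl | hkp := (Nat.lt_succ_iff.mp hk).eq_or_lt
      · rw [fwdDiff_iter_eq_zero_of_le hf hd, Pi.zero_apply, smul_zero]
      · obtain ⟨c, hc⟩ := hp.dvd_choose_self (k := k) (by lia) hkp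
        rw [hc, mul_comm, mul_smul, ← Pi.smul_apply p, nsmul_iter (by lia), Pi.zero_apply,
          smul_zero]
    rw [← Finset.sum_subset (Finset.range_mono (by have := hp.two_le; lia)) higher_terms] at newton
    simpa [Finset.sum_range_succ] using newton

lemma exists_eq_comp_add_const {d : ℕ} (hp : p.Prime) (hd : d ≤ p) {e : ZMod p →+ M}
    (he_torsion : ∀ m, p • m = 0 → m ∈ e.range) {a : ZMod p → M} (ha : (fwdDiff 1)^[d] a = 0) :
    ∃ v : ZMod p → ZMod p, a = e ∘ v + fun _ ↦ a 0 := by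
  have : NeZero p := ⟨hp.ne_zero⟩
  have nsmul_fwdDiff (j : ZMod p) : Δ_[1] a j ∈ (nsmulAddMonoidHom p : M →+ M).ker :=
    congrFun (nsmul_fwdDiff_eq_zero_of_iter_eq_zero hp hd ha) j
  choose v hv using fun i ↦ he_torsion _ (sub_mem_of_fwdDiff_mem nsmul_fwdDiff i)
  exact ⟨v, funext fun i ↦ by simp [hv]⟩

lemma mem_of_fwdDiff_iter_eq_zero {r : ℕ} (hp : p.Prime) {S : AddSubgroup (ZMod p → ZMod p)}
    (hS : ∀ u ∈ S, Δ_[1] u ∈ S) {v : ZMod p → ZMod p} (hv : v ∈ S)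
    (hv_succ : (fwdDiff 1)^[r + 1] v = 0) (hv_ne : (fwdDiff 1)^[r] v ≠ 0) {f : ZMod p → ZMod p}
    (hf : (fwdDiff 1)^[r + 1] f = 0) : f ∈ S := by
  have : Fact p.Prime := ⟨hp⟩
  have iter_v_eq (i : ZMod p) : (fwdDiff 1)^[r] v i = (fwdDiff 1)^[r] v 0 :=
    eq_const_of_fwdDiff_eq_zero (by rwa [Function.iterate_succ_apply'] at hv_succ) i
  have iter_v_ne : (fwdDiff 1)^[r] v 0 ≠ 0 := fun h ↦
    hv_ne (funext fun i ↦ (iter_v_eq i).trans h)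
  refine mem_of_pow_apply_eq_zero (T := fwdDiffₗ (ZMod p) (ZMod p) 1)
    (S := AddSubgroup.toIntSubmodule S) hS hv (r := r) (fun u hu ↦ ?_) le_rfl
    (by rwa [coe_fwdDiffₗ_pow])
  refine Submodule.mem_span_singleton.mpr ⟨(u 0 / (fwdDiff 1)^[r] v 0).val, funext fun i ↦ ?_⟩
  rw [coe_fwdDiffₗ_pow, eq_const_of_fwdDiff_eq_zero hu i, Pi.smul_apply, iter_v_eq i, zsmul_eq_mul,
    Int.cast_natCast, ZMod.natCast_zmod_val, div_mul_cancel₀ _ iter_v_ne]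

lemma comp_mem_sup_range_const {r : ℕ} (hp : p.Prime) (hr : r ≠ 0) (hrp : r < p)
    {e : ZMod p →+ M} (he : Function.Injective e)
    (he_torsion : ∀ m, p • m = 0 → m ∈ e.range) {A : AddSubgroup (ZMod p → M)}
    (hA : ∀ u ∈ A, Δ_[1] u ∈ A) {a : ZMod p → M} (ha : a ∈ A) (ha_succ : (fwdDiff 1)^[r + 1] a = 0)
    (ha_ne : (fwdDiff 1)^[r] a ≠ 0) {f : ZMod p → ZMod p} (hf : (fwdDiff 1)^[r + 1] f = 0) :
    e ∘ f ∈ A ⊔ (Pi.constAddMonoidHom (ZMod p) M).range := by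
  set B : AddSubgroup (ZMod p → M) := A ⊔ (Pi.constAddMonoidHom (ZMod p) M).range
  obtain ⟨v, hv⟩ := exists_eq_comp_add_const hp hrp he_torsion ha_succ
  have iter_a {k : ℕ} (hk : k ≠ 0) : (fwdDiff 1)^[k] a = e ∘ (fwdDiff 1)^[k] v := by
    obtain ⟨k, rfl⟩ := Nat.exists_eq_succ_of_ne_zero hk
    rw [← fwdDiff_iter_addMonoidHom_comp, hv, fwdDiff_iter_succ_add_const]
  refine mem_of_fwdDiff_iter_eq_zero hp (S := B.comap (e.compLeft (ZMod p))) (v := v) ?_ ?_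
    (r := r) ?_ ?_ hf
  · intro u hu
    obtain ⟨u', hu', _, ⟨c, rfl⟩, hsum⟩ := AddSubgroup.mem_sup.mp (show e ∘ u ∈ B from hu)
    have fwdDiff_comp : e ∘ Δ_[1] u = Δ_[1] u' := calc
      e ∘ Δ_[1] u = Δ_[1] (e ∘ u) := (fwdDiff_iter_addMonoidHom_comp 1 e u 1).symm
      _ = Δ_[1] (u' + fun _ ↦ c) := congrArg _ hsum.symm
      _ = Δ_[1] u' := fwdDiff_iter_succ_add_const 1 u' c 0
    exact (fwdDiff_comp ▸ AddSubgroup.mem_sup_left (hA u' hu') : e ∘ Δ_[1] u ∈ B)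
  · have comp_v : e ∘ v = a - fun _ ↦ a 0 := eq_sub_of_add_eq hv.symm
    exact (comp_v ▸ B.sub_mem (AddSubgroup.mem_sup_left ha)
      (AddSubgroup.mem_sup_right ⟨a 0, rfl⟩) : e ∘ v ∈ B)
  · exact funext fun i ↦ he <| by simpa [ha_succ] using (congrFun (iter_a r.succ_ne_zero) i).symm
  · exact fun h ↦ ha_ne <| by rw [iter_a hr, h]; exact funext fun _ ↦ map_zero e

end ForwardDifference

lemma card_comap_le {A B : Type*} [Group A] [Finite A] [Group B] [Finite B] (f : A →* B)
    (S : Subgroup B) : Nat.card (S.comap f) ≤ Nat.card f.ker * Nat.card S := by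
  have card_ker : Nat.card (f.subgroupComap S).ker ≤ Nat.card f.ker :=
    Nat.card_le_card_of_injective (fun a ↦ ⟨a.1.1, congrArg Subtype.val a.2⟩) fun a b h ↦
      Subtype.ext (Subtype.ext (congrArg (Subtype.val : f.ker → A) h))
  rw [← (f.subgroupComap S).ker.card_mul_index, Subgroup.index_ker]
  exact Nat.mul_le_mul card_ker (Subgroup.card_le_card_group _)

lemma mem_iterate_comap_bot {A : Type*} [Group A] {T : A →* A} {k : ℕ} {a : A} :
    a ∈ (Subgroup.comap T)^[k] ⊥ ↔ T^[k] a = 1 := by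
  induction k generalizing a with
  | zero => exact Subgroup.mem_bot
  | succ k ih =>
    rw [Function.iterate_succ_apply', Function.iterate_succ_apply, Subgroup.mem_comap, ih]

lemma exists_iterate_succ_eq_one {A : Type*} [Group A] [Finite A] {T : A →* A} {c r : ℕ}
    (hT : ∀ a, T^[c] a = 1) (hr : Nat.card T.ker ^ r < Nat.card A) :
    ∃ a, T^[r + 1] a = 1 ∧ T^[r] a ≠ 1 := by
  have card_le (k : ℕ) : Nat.card ((Subgroup.comap T)^[k] ⊥ : Subgroup A) ≤ Nat.card T.ker ^ k := by
    induction k with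
    | zero => exact Subgroup.card_bot.le
    | succ k ih =>
      rw [Function.iterate_succ_apply', pow_succ']
      exact (card_comap_le T _).trans (Nat.mul_le_mul_left _ ih)
  obtain ⟨a, ha⟩ : ∃ a, T^[r] a ≠ 1 := by
    by_contra! h
    refine (card_le r).not_gt (hr.trans_eq ?_)
    rw [(Subgroup.eq_top_iff' _).mpr fun a ↦ mem_iterate_comap_bot.mpr (h a), Subgroup.card_top]
  classical
  have hex : ∃ m, T^[r + m] a = 1 := ⟨c, by rw [add_comm, Function.iterate_add_apply]; exact hT _⟩
  obtain ⟨m, hm⟩ : ∃ m, Nat.find hex = m + 1 :=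
    Nat.exists_eq_succ_of_ne_zero fun h ↦ ha (by have := Nat.find_spec hex; rwa [h] at this)
  refine ⟨T^[m] a, ?_, ?_⟩
  · rw [← Function.iterate_add_apply, add_assoc, add_comm 1, ← hm]
    exact Nat.find_spec hex
  · rw [← Function.iterate_add_apply]
    exact Nat.find_min hex (by lia)

section Group

open Subgroup
open scoped commutatorElement

variable {G : Type*} [Group G]

lemma commutatorElement_mem_right {C : Subgroup G} [C.Normal] (g : G) {a : G} (ha : a ∈ C) :
    ⁅g, a⁆ ∈ C :=
  commutator_le_right ⊤ C (commutator_mem_commutator (mem_top g) ha)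

-- Take `y` in `C ⊓ γ \ B`, where `γ` is the last term of the lower central series with
-- `¬ C ⊓ γ ≤ B`.
lemma exists_forall_commutator_mem [Group.IsNilpotent G] {B C : Subgroup G} [C.Normal]
    (hCB : ¬ C ≤ B) : ∃ y ∈ C, y ∉ B ∧ ∀ g, ⁅y, g⁆ ∈ B := by
  classical
  have hex : ∃ m, C ⊓ Subgroup.lowerCentralSeries (⊤ : Subgroup G) m ≤ B := by
    obtain ⟨m, hm⟩ := Subgroup.nilpotent_iff_lowerCentralSeries.mp ‹_›
    exact ⟨m, by simp [hm]⟩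
  obtain ⟨m, hm⟩ : ∃ m, Nat.find hex = m + 1 := Nat.exists_eq_succ_of_ne_zero fun h ↦
    hCB (by simpa [h] using Nat.find_spec hex)
  obtain ⟨y, ⟨hyC, hym⟩, hyB⟩ := SetLike.not_le_iff_exists.mp
    (Nat.find_min hex (m := m) (by lia))
  refine ⟨y, hyC, hyB, fun g ↦ Nat.find_spec hex ⟨?_, ?_⟩⟩
  · exact commutator_le_left C ⊤ (commutator_mem_commutator hyC (mem_top g))
  · rw [hm]
    exact commutator_mem_commutator hym (mem_top g)

lemma exists_commutator_mem_center [Group.IsNilpotent G] {C : Subgroup G} [C.Normal]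
    (hC : ¬ C ≤ centralizer C) : ∃ y ∈ C, ∃ c ∈ C, ⁅y, c⁆ ∈ center G ∧ ⁅y, c⁆ ≠ 1 := by
  obtain ⟨y, hy, hyC, hy_comm⟩ := exists_forall_commutator_mem hC
  obtain ⟨c, hc, hcy, hc_comm⟩ := exists_forall_commutator_mem (B := centralizer {y}) (C := C)
    fun h ↦ hyC fun d hd ↦ (mem_centralizer_singleton_iff.mp (h hd))
  refine ⟨y, hy, c, hc, mem_center_iff.mpr fun g ↦ ?_, fun h ↦ hcy ?_⟩
  · have hz : ⁅y, c⁆ ∈ centralizer C := hy_comm c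
    have hyC' : ⁅g, y⁆ ∈ centralizer C := commutatorElement_inv y g ▸ inv_mem (hy_comm g)
    have hcy' : Commute ⁅g, c⁆ y :=
      mem_centralizer_singleton_iff.mp (commutatorElement_inv c g ▸ inv_mem (hc_comm g))
    have hcC : ⁅g, c⁆ ∈ C := commutatorElement_mem_right g hc
    have hcomm : Commute ⁅g, y⁆ (⁅g, c⁆ * c) := (hyC' _ (mul_mem hcC hc)).symm
    have hcomm' : Commute ⁅g, y⁆ ⁅y, ⁅g, c⁆ * c⁆ :=
      (hyC' _ (commutatorElement_mem_right y (mul_mem hcC hc))).symm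
    rw [← mul_inv_eq_iff_eq_mul]
    calc g * ⁅y, c⁆ * g⁻¹ = MulAut.conj g ⁅y, c⁆ := rfl
      _ = ⁅⁅g, y⁆ * y, ⁅g, c⁆ * c⁆ := by
        rw [map_commutatorElement, conj_eq_commutatorElement_mul, conj_eq_commutatorElement_mul]
      _ = ⁅y, ⁅g, c⁆ * c⁆ := by
        rw [commutatorElement_mul_left_eq_conj_mul, hcomm.commutator_eq, mul_one,
          hcomm'.mul_inv_cancel]
      _ = ⁅y, c⁆ := by
        rw [commutatorElement_mul_right_eq_mul_conj, hcy'.symm.commutator_eq, one_mul]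
        exact Commute.mul_inv_cancel (hz _ hcC)
  · exact mem_centralizer_singleton_iff.mpr (commutatorElement_eq_one_iff_mul_comm.mp h).symm

lemma exists_pow_mul_mem {C : Subgroup G} [C.Normal] {p : ℕ} [Fact p.Prime] (hC : C.index = p)
    {g : G} (hg : g ∉ C) (h : G) : ∃ i : ZMod p, g ^ i.val * h ∈ C := by
  obtain ⟨k, hk⟩ := mem_powers_of_prime_card (p := p) (g := (g : G ⧸ C)) (g' := (h : G ⧸ C)⁻¹)
    hC (mt (QuotientGroup.eq_one_iff g).mp hg)
  have pow_index : (g : G ⧸ C) ^ p = 1 := by rw [← hC]; exact pow_card_eq_one'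
  refine ⟨k, (QuotientGroup.eq_one_iff _).mp ?_⟩
  rw [QuotientGroup.mk_mul, QuotientGroup.mk_pow, ZMod.val_natCast, ← pow_eq_pow_mod k pow_index]
  exact mul_eq_one_iff_eq_inv.mpr hk

lemma mem_center_of_commute {C : Subgroup G} [C.Normal] [IsMulCommutative C] (hC : C.index.Prime)
    {g a : G} (hg : g ∉ C) (ha : a ∈ C) (hga : Commute g a) : a ∈ center G := by
  have : Fact C.index.Prime := ⟨hC⟩
  refine mem_center_iff.mpr fun h ↦ ?_
  obtain ⟨i, hi⟩ := exists_pow_mul_mem rfl hg h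
  have comm_a : Commute (g ^ i.val * h) a := setLike_mul_comm hi ha
  rw [← inv_mul_cancel_left (g ^ i.val) h]
  exact ((hga.pow_left i.val).inv_left.mul_left comm_a).eq

/-- The endomorphism `a ↦ ⁅g, a⁆` of a commutative normal subgroup. -/
def commutatorHom (C : Subgroup G) [C.Normal] [IsMulCommutative C] (g : G) : C →* C :=
  MonoidHom.mk' (fun a ↦ ⟨⁅g, a⁆, commutatorElement_mem_right g a.2⟩) fun a b ↦ Subtype.ext <| by
    have : Commute (a : G) ⁅g, (b : G)⁆ := setLike_mul_comm a.2 (commutatorElement_mem_right g b.2)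
    simp [commutatorElement_mul_right_eq_mul_conj, mul_assoc, this.mul_inv_cancel_assoc]

variable {C : Subgroup G} [C.Normal] [IsMulCommutative C]

lemma card_ker_commutatorHom_le [Finite G] (hC : C.index.Prime) {g : G} (hg : g ∉ C) :
    Nat.card (commutatorHom C g).ker ≤ Nat.card (center G) :=
  Nat.card_le_card_of_injective
    (fun a ↦ ⟨a.1, mem_center_of_commute hC hg a.1.2
      (commutatorElement_eq_one_iff_commute.mp (congrArg Subtype.val a.2))⟩)
    fun _ _ h ↦ Subtype.ext (Subtype.ext (congrArg (Subtype.val : center G → G) h))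

lemma exists_iterate_commutatorHom_eq_one [Group.IsNilpotent G] (g : G) :
    ∃ c, ∀ a, (commutatorHom C g)^[c] a = 1 := by
  obtain ⟨c, hc⟩ := Subgroup.nilpotent_iff_lowerCentralSeries.mp ‹Group.IsNilpotent G›
  have mem_series (k : ℕ) (a : C) :
      ((commutatorHom C g)^[k] a : G) ∈ Subgroup.lowerCentralSeries (⊤ : Subgroup G) k := by
    induction k with
    | zero => exact mem_top _
    | succ k ih =>
      rw [Function.iterate_succ_apply']
      exact (commutator_comm ⊤ _).le (commutator_mem_commutator (mem_top g) ih)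
  exact ⟨c, fun a ↦ Subtype.ext <| mem_bot.mp (hc ▸ mem_series c a)⟩

lemma conjNormal_pow_index (g : G) : (MulAut.conjNormal g : MulAut C) ^ C.index = 1 := by
  rw [← map_pow]
  exact MulEquiv.ext fun a ↦ Subtype.ext <|
    Commute.mul_inv_cancel (setLike_mul_comm (C.pow_index_mem g) a.2)

lemma conjNormal_eq_commutatorHom_mul (g : G) (a : C) :
    MulAut.conjNormal g a = commutatorHom C g a * a :=
  Subtype.ext conj_eq_commutatorElement_mul

lemma conjNormal_pow_eq_commutatorHom_pow_mul {g : G} {x : C} (hx : ⁅g, (x : G)⁆ ∈ center G)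
    (k : ℕ) : (MulAut.conjNormal g ^ k) x = commutatorHom C g x ^ k * x := by
  have fixed : MulAut.conjNormal g (commutatorHom C g x) = commutatorHom C g x :=
    Subtype.ext (Commute.mul_inv_cancel (mem_center_iff.mp hx g))
  induction k with
  | zero => simp
  | succ k ih =>
    rw [pow_succ', MulAut.mul_apply, ih, map_mul, map_pow, fixed, conjNormal_eq_commutatorHom_mul,
      pow_succ, mul_assoc]

end Group

section Orbit

open scoped fwdDiff

/-- The values `i ↦ l (σ ^ i • a)` of a homomorphism `l` along the orbit of `a` under `σ`, as an
additive map in `a`. The exponent is the representative `i.val`, so that shifting `i` amounts to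
applying `σ` only when `σ ^ p = 1`. -/
def orbitHom {A M : Type*} [Group A] [CommGroup M] (p : ℕ) (σ : MulAut A) (l : A →* M) :
    Additive A →+ (ZMod p → Additive M) :=
  AddMonoidHom.mk' (fun a i ↦ Additive.ofMul (l ((σ ^ i.val) a.toMul))) fun a b ↦ by
    ext; simp

lemma fwdDiff_orbitHom {A M : Type*} [Group A] [CommGroup M] {p : ℕ} [NeZero p] {σ : MulAut A}
    (hσ : σ ^ p = 1) (l : A →* M) {a b : A} (hab : σ a = b * a) :
    Δ_[1] (orbitHom p σ l (.ofMul a)) = orbitHom p σ l (.ofMul b) := by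
  funext i
  have pow_val : σ ^ (i + 1).val = σ ^ i.val * σ := by
    rw [ZMod.val_add, ZMod.val_one_eq_one_mod, Nat.add_mod_mod, ← pow_eq_pow_mod _ hσ, pow_succ]
  simp [fwdDiff, orbitHom, pow_val, hab]

end Orbit

lemma isIrreducible_of_simple {k G : Type*} [Field k] [Group G] (V : FDRep k G) [Simple V] :
    Representation.IsIrreducible V.ρ where
  exists_pair_ne := by
    refine ⟨⊥, ⊤, fun h ↦ id_nonzero V ?_⟩
    ext v
    exact (Submodule.eq_bot_iff ⊤).mp (congrArg (·.toSubmodule) h.symm) v trivial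
  eq_bot_or_eq_top W := by
    let inclusion : FDRep.of W.toRepresentation ⟶ V :=
      ⟨⟨ModuleCat.ofHom W.toSubmodule.subtype⟩, fun _ ↦ rfl⟩
    have : Mono inclusion :=
      ConcreteCategory.mono_of_injective inclusion fun _ _ h ↦ Subtype.ext h
    refine or_iff_not_imp_left.mpr fun hW ↦ ?_
    have inclusion_ne_zero : inclusion ≠ 0 := fun h ↦ hW <|
      Subrepresentation.toSubmodule_injective <| (Submodule.eq_bot_iff _).mpr fun w hw ↦
        congrArg (fun φ : FDRep.of W.toRepresentation ⟶ V ↦ φ.hom.hom.hom ⟨w, hw⟩) h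
    have : IsIso inclusion := isIso_of_mono_of_nonzero inclusion_ne_zero
    let equiv := FDRep.isoToLinearEquiv (asIso inclusion)
    refine Subrepresentation.toSubmodule_injective (Submodule.eq_top_iff'.mpr fun v ↦ ?_)
    exact equiv.apply_symm_apply v ▸ Subtype.property (p := (· ∈ W.toSubmodule)) (equiv.symm v)

section Representation

variable {k G V : Type*} [Field k] [Group G] [AddCommGroup V] [Module k V]

open Subgroup
open scoped commutatorElement

/-- The elements acting by scalars. For an irreducible representation with character `χ` this is
the subgroup usually written `Z(χ)`. -/
def scalarSubgroup (ρ : Representation k G V) : Subgroup G :=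
  (Units.map (algebraMap k (Module.End k V)).toMonoidHom).range.comap ρ.toHomUnits

variable {ρ : Representation k G V}

lemma mem_scalarSubgroup {g : G} :
    g ∈ scalarSubgroup ρ ↔ ∃ c : kˣ, ρ g = algebraMap k (Module.End k V) c :=
  exists_congr fun _ ↦ Units.ext_iff.trans eq_comm

lemma nontrivial_of_isIrreducible [ρ.IsIrreducible] : Nontrivial V := by
  by_contra h
  have : Subsingleton V := not_nontrivial_iff_subsingleton.mp h
  exact bot_ne_top (α := Subrepresentation ρ) <|
    Subrepresentation.toSubmodule_injective (Subsingleton.elim _ _)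

lemma mem_scalarSubgroup_of_forall_commute [IsAlgClosed k] [FiniteDimensional k V]
    [ρ.IsIrreducible] {g : G} (hg : ∀ h, Commute (ρ g) (ρ h)) : g ∈ scalarSubgroup ρ := by
  obtain ⟨c, hc⟩ :=
    (Representation.IsIrreducible.algebraMap_intertwiningMap_bijective_of_isAlgClosed
      (ρ := ρ)).surjective ⟨ρ g, hg⟩
  have hc' : ρ g = algebraMap k (Module.End k V) c := congrArg (·.toLinearMap) hc.symm
  have : Nontrivial V := nontrivial_of_isIrreducible (ρ := ρ)
  have hc0 : c ≠ 0 := by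
    rintro rfl
    exact ((Group.isUnit g).map ρ).ne_zero (hc'.trans (map_zero _))
  exact mem_scalarSubgroup.mpr ⟨Units.mk0 c hc0, hc'⟩

lemma center_le_scalarSubgroup [IsAlgClosed k] [FiniteDimensional k V] [ρ.IsIrreducible] :
    center G ≤ scalarSubgroup ρ := fun g hg ↦
  mem_scalarSubgroup_of_forall_commute fun h ↦ by
    simp only [Commute, SemiconjBy, ← map_mul, mem_center_iff.mp hg h]

lemma eq_top_of_forall_apply_mem [ρ.IsIrreducible] {v : V} (hv : v ≠ 0) {W : Submodule k V}
    (hW : ∀ g, ρ g v ∈ W) : W = ⊤ := by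
  let orbitSpan : Submodule k V := Submodule.span k (Set.range fun g ↦ ρ g v)
  have orbitSpan_le (g : G) : orbitSpan ≤ orbitSpan.comap (ρ g) := by
    refine Submodule.span_le.mpr (Set.range_subset_iff.mpr fun h ↦ ?_)
    exact Submodule.subset_span ⟨g * h, by simp⟩
  have v_mem : v ∈ orbitSpan := Submodule.subset_span ⟨1, by simp⟩
  obtain h | h := eq_bot_or_eq_top (⟨orbitSpan, orbitSpan_le⟩ : Subrepresentation ρ)
  · exact absurd ((Submodule.eq_bot_iff _).mp (congrArg (·.toSubmodule) h) v v_mem) hv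
  · rw [eq_top_iff, ← show orbitSpan = ⊤ from congrArg (·.toSubmodule) h]
    exact Submodule.span_le.mpr (Set.range_subset_iff.mpr hW)

lemma character_eq_zero_of_commutator (hinj : Function.Injective ρ) {g h : G}
    (hz : ⁅h, g⁆ ∈ scalarSubgroup ρ) (hz1 : ⁅h, g⁆ ≠ 1) : ρ.character g = 0 := by
  obtain ⟨c, hc⟩ := mem_scalarSubgroup.mp hz
  have hc1 : (c : k) ≠ 1 := fun h ↦ hz1 <| hinj <| by rw [hc, h, map_one, map_one]
  have scalar_mul : c * ρ.character g = ρ.character g := calc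
    c * ρ.character g = ρ.character (⁅h, g⁆ * g) := by
      simp [Representation.character, hc, ← Algebra.smul_def]
    _ = ρ.character g := by rw [commutatorElement_def, inv_mul_cancel_right, ρ.char_conj]
  by_contra hχ
  exact hc1 ((mul_eq_right₀ hχ).mp scalar_mul)

lemma exists_forall_apply_eq_smul [IsAlgClosed k] [FiniteDimensional k V] [Nontrivial V]
    (hρ : ∀ g h, Commute (ρ g) (ρ h)) : ∃ v ≠ 0, ∀ g, ∃ c : k, ρ g v = c • v := by
  have : WellFoundedLT (Subrepresentation ρ) :=
    StrictMono.wellFoundedLT (f := Subrepresentation.toSubmodule) fun _ _ h ↦ h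
  have top_ne_bot : (⊤ : Subrepresentation ρ) ≠ ⊥ := fun h ↦
    top_ne_bot (α := Submodule k V) (congrArg (·.toSubmodule) h)
  have := isAtomic_of_orderBot_wellFounded_lt (α := Subrepresentation ρ) wellFounded_lt
  obtain ⟨W, hW, -⟩ := (eq_bot_or_exists_atom_le _).resolve_left top_ne_bot
  have W_ne_bot : W.toSubmodule ≠ ⊥ := fun h ↦ hW.1 (Subrepresentation.toSubmodule_injective h)
  obtain ⟨v, hvW, hv⟩ := Submodule.exists_mem_ne_zero_of_ne_bot W_ne_bot
  refine ⟨v, hv, fun g ↦ ?_⟩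
  have : Nontrivial W.toSubmodule := Submodule.nontrivial_iff_ne_bot.mpr W_ne_bot
  obtain ⟨c, hc⟩ := Module.End.exists_eigenvalue (W.toRepresentation g)
  obtain ⟨w, hw⟩ := hc.exists_hasEigenvector
  let E : Subrepresentation ρ :=
    ⟨W.toSubmodule ⊓ Module.End.eigenspace (ρ g) c, fun h u hu ↦
      ⟨W.apply_mem_toSubmodule h hu.1,
        Module.End.mapsTo_genEigenspace_of_comm (hρ g h) c 1 hu.2⟩⟩
  have w_mem : (w : V) ∈ E.toSubmodule :=
    ⟨w.2, Module.End.mem_eigenspace_iff.mpr (congrArg Subtype.val hw.apply_eq_smul)⟩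
  have E_le : E ≤ W := fun u (hu : u ∈ E.toSubmodule) ↦ hu.1
  have E_ne_bot : E ≠ ⊥ := fun h ↦ hw.2 <| Subtype.ext <|
    (Submodule.eq_bot_iff E.toSubmodule).mp (congrArg (·.toSubmodule) h) w w_mem
  have E_eq : E = W := (hW.le_iff.mp E_le).resolve_left E_ne_bot
  exact ⟨c, Module.End.mem_eigenspace_iff.mp (E_eq ▸ hvW : v ∈ E).2⟩

lemma exists_monoidHom_forall_apply_eq_smul [IsAlgClosed k] [FiniteDimensional k V] [Nontrivial V]
    (hρ : ∀ g h, Commute (ρ g) (ρ h)) : ∃ l : G →* kˣ, ∃ v ≠ 0, ∀ g, ρ g v = l g • v := by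
  obtain ⟨v, hv, h⟩ := exists_forall_apply_eq_smul hρ
  choose c hc using h
  let l : G →* k :=
    { toFun := c
      map_one' := smul_left_injective k hv (by simp [← hc])
      map_mul' g h := smul_left_injective k hv <| by
        simp only [← hc, map_mul, Module.End.mul_apply, mul_smul]
        rw [hc h, map_smul, hc g, smul_comm] }
  exact ⟨l.toHomUnits, v, hv, hc⟩

end Representation

section Weights

variable {k G V : Type*} [Field k] [Group G] [AddCommGroup V] [Module k V]

open Subgroup Module
open scoped commutatorElement

variable {ρ : Representation k G V}

lemma eq_one_of_apply_eq_self (hinj : Function.Injective ρ) {z : G} (hz : z ∈ scalarSubgroup ρ)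
    {v : V} (hv : v ≠ 0) (hzv : ρ z v = v) : z = 1 := by
  obtain ⟨c, hc⟩ := mem_scalarSubgroup.mp hz
  have hc1 : (c : k) = 1 := smul_left_injective k hv (by simpa [hc] using hzv)
  exact hinj (by rw [hc, hc1, map_one, map_one])

variable {C : Subgroup G} [C.Normal] [IsMulCommutative C]

lemma exists_monoidHom_apply_eq_conjNormal_smul [IsAlgClosed k] [FiniteDimensional k V]
    [Nontrivial V] (ρ : Representation k G V) :
    ∃ (l : C →* kˣ) (v : V), v ≠ 0 ∧
      ∀ (g : G) (a : C), ρ a (ρ g⁻¹ v) = l (MulAut.conjNormal g a) • ρ g⁻¹ v := by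
  obtain ⟨l, v, hv, hl⟩ := exists_monoidHom_forall_apply_eq_smul (ρ := ρ.comp C.subtype)
    fun a b ↦ show ρ a * ρ b = ρ b * ρ a by
      rw [← map_mul, ← map_mul, setLike_mul_comm a.2 b.2]
  refine ⟨l, v, hv, fun g a ↦ ?_⟩
  calc ρ a (ρ g⁻¹ v) = ρ (g⁻¹ * MulAut.conjNormal g a) v := by
        rw [← Module.End.mul_apply, ← map_mul, MulAut.conjNormal_apply]; group
    _ = ρ g⁻¹ (ρ (MulAut.conjNormal g a : C) v) := by rw [map_mul, Module.End.mul_apply]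
    _ = l (MulAut.conjNormal g a) • ρ g⁻¹ v := by
        rw [show ρ (MulAut.conjNormal g a : C) v = _ from hl (MulAut.conjNormal g a),
          LinearMap.map_smul_of_tower]

variable [IsAlgClosed k] [FiniteDimensional k V] [ρ.IsIrreducible]

lemma isPrimitiveRoot_of_apply_eq_smul (hC : C.index.Prime) (hinj : Function.Injective ρ) {g : G}
    {x : C} (hx : ⁅g, (x : G)⁆ ∈ center G) (hx1 : ⁅g, (x : G)⁆ ≠ 1) {l : C →* kˣ} {v : V}
    (hv : v ≠ 0) (hl : ∀ a : C, ρ a v = l a • v) :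
    IsPrimitiveRoot (l (commutatorHom C g x)) C.index := by
  have : Fact C.index.Prime := ⟨hC⟩
  have pow_index : commutatorHom C g x ^ C.index = 1 := by
    simpa [conjNormal_pow_index] using conjNormal_pow_eq_commutatorHom_pow_mul hx C.index
  refine IsPrimitiveRoot.iff_orderOf.mpr (orderOf_eq_prime ?_ fun hone ↦ hx1 ?_)
  · rw [← map_pow, pow_index, map_one]
  · exact eq_one_of_apply_eq_self hinj (center_le_scalarSubgroup hx) hv
      ((hl (commutatorHom C g x)).trans (by rw [hone, one_smul]))

lemma exists_basis_apply_eq_smul {p : ℕ} [Fact p.Prime] (hC : C.index = p)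
    (hinj : Function.Injective ρ) {g : G} (hg : g ∉ C) {x : C} (hx : ⁅g, (x : G)⁆ ∈ center G)
    (hx1 : ⁅g, (x : G)⁆ ≠ 1) :
    ∃ (l : C →* kˣ) (b : Basis (ZMod p) k V), IsPrimitiveRoot (l (commutatorHom C g x)) p ∧
      ∀ (i : ZMod p) (a : C), ρ a (b i) = l ((MulAut.conjNormal g ^ i.val) a) • b i := by
  have : Nontrivial V := nontrivial_of_isIrreducible (ρ := ρ)
  obtain ⟨l, v, hv, hl⟩ := exists_monoidHom_apply_eq_conjNormal_smul (C := C) ρ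
  have l_prim : IsPrimitiveRoot (l (commutatorHom C g x)) p := hC ▸
    isPrimitiveRoot_of_apply_eq_smul (hC ▸ Fact.out) hinj hx hx1 hv fun a ↦ by simpa using hl 1 a
  let b (i : ZMod p) : V := ρ (g ^ i.val)⁻¹ v
  have apply_b (i : ZMod p) (a : C) : ρ a (b i) = l ((MulAut.conjNormal g ^ i.val) a) • b i := by
    rw [← map_pow]
    exact hl _ a
  have weight_injective :
      Function.Injective fun i : ZMod p ↦ (l ((MulAut.conjNormal g ^ i.val) x) : k) := by
    intro i j hij
    have hpow : l (commutatorHom C g x) ^ i.val = l (commutatorHom C g x) ^ j.val := by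
      simpa [conjNormal_pow_eq_commutatorHom_pow_mul hx] using Units.ext hij
    exact ZMod.val_injective p (l_prim.pow_inj i.val_lt j.val_lt hpow)
  have b_ne (i : ZMod p) : b i ≠ 0 := fun h ↦ hv (by
    simpa [b, -map_pow] using congrArg (ρ (g ^ i.val)) h)
  have b_indep : LinearIndependent k b :=
    Module.End.eigenvectors_linearIndependent' (ρ x) _ weight_injective b fun i ↦
      ⟨Module.End.mem_eigenspace_iff.mpr (apply_b i x), b_ne i⟩
  have b_span : Submodule.span k (Set.range b) = ⊤ := by
    refine eq_top_of_forall_apply_mem (ρ := ρ) hv fun h ↦ ?_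
    obtain ⟨i, hi⟩ := exists_pow_mul_mem hC hg h
    have apply_h : ρ h v = l ⟨_, hi⟩ • b i := by
      have := congrArg (ρ (g ^ i.val)⁻¹) (hl 1 ⟨_, hi⟩)
      simpa [b, -map_pow, LinearMap.map_smul_of_tower] using this
    rw [apply_h]
    exact Submodule.smul_mem _ _ (Submodule.subset_span ⟨i, rfl⟩)
  exact ⟨l, Basis.mk b_indep b_span.ge, l_prim, by simpa using apply_b⟩

end Weights

section Vanishing

variable {k G V : Type*} [Field k] [Group G] [AddCommGroup V] [Module k V]

open Subgroup Module
open scoped commutatorElement fwdDiff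

variable {C : Subgroup G} [C.Normal] {p : ℕ} {g : G} {l : C →* kˣ}

lemma character_eq_sum_of_basis [NeZero p] {ρ : Representation k G V} {b : Basis (ZMod p) k V}
    (hb : ∀ (i : ZMod p) (a : C), ρ a (b i) = l ((MulAut.conjNormal g ^ i.val) a) • b i) (a : C) :
    ρ.character a = ∑ i : ZMod p, (l ((MulAut.conjNormal g ^ i.val) a) : k) := by
  rw [Representation.character, LinearMap.trace_eq_matrix_trace k b, Matrix.trace]
  exact Finset.sum_congr rfl fun i _ ↦ by simp [LinearMap.toMatrix_apply, hb, Units.smul_def]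

lemma orbitHom_injective_of_basis {ρ : Representation k G V} (hinj : Function.Injective ρ)
    {b : Basis (ZMod p) k V}
    (hb : ∀ (i : ZMod p) (a : C), ρ a (b i) = l ((MulAut.conjNormal g ^ i.val) a) • b i) :
    Function.Injective (orbitHom p (MulAut.conjNormal g) l) := by
  refine (injective_iff_map_eq_zero _).mpr fun a ha ↦ Subtype.ext (hinj (b.ext fun i ↦ ?_))
  have weight_eq_one : l ((MulAut.conjNormal g ^ i.val) a.toMul) = 1 := congrFun ha i
  exact (hb i a.toMul).trans (by rw [weight_eq_one, one_smul]; exact (ρ.map_one ▸ rfl))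

variable [IsMulCommutative C]

lemma fwdDiff_iter_orbitHom_conjNormal [NeZero p] {M : Type*} [CommGroup M] (hC : C.index = p)
    (g : G) (l : C →* M) (a : C) (m : ℕ) :
    (fwdDiff 1)^[m] (orbitHom p (MulAut.conjNormal g) l (.ofMul a)) =
      orbitHom p (MulAut.conjNormal g) l (.ofMul ((commutatorHom C g)^[m] a)) := by
  induction m generalizing a with
  | zero => rfl
  | succ m ih =>
    rw [Function.iterate_succ_apply, Function.iterate_succ_apply, ← ih,
      fwdDiff_orbitHom (hC ▸ conjNormal_pow_index g) l (conjNormal_eq_commutatorHom_mul g a)]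

variable [Fact p.Prime]

lemma exists_orbitHom_eq_zmodChar_comp_add [Finite G] [Group.IsNilpotent G] (hC : C.index = p)
    (hg : g ∉ C) (hcenter : Nat.card (center G) ≤ p) {r : ℕ} (hr0 : r ≠ 0) (hrp : r < p)
    (hcard : p ^ r < Nat.card C) {ζ : kˣ} (hζ : IsPrimitiveRoot ζ p)
    (hl : Function.Injective (orbitHom p (MulAut.conjNormal g) l)) {f : ZMod p → ZMod p}
    (hf : (fwdDiff 1)^[r + 1] f = 0) :
    ∃ (a : C) (c : Additive kˣ), orbitHom p (MulAut.conjNormal g) l (.ofMul a) =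
      (AddChar.zmodChar p hζ.pow_eq_one).toAddMonoidHom ∘ f + fun _ ↦ c := by
  have hp : p.Prime := Fact.out
  have card_ker : Nat.card (commutatorHom C g).ker ^ r < Nat.card C :=
    (Nat.pow_le_pow_left ((card_ker_commutatorHom_le (hC ▸ hp) hg).trans hcenter) r).trans_lt hcard
  obtain ⟨m, hm⟩ := exists_iterate_commutatorHom_eq_one (C := C) g
  obtain ⟨a₀, ha₀, ha₀'⟩ := exists_iterate_succ_eq_one hm card_ker
  obtain ⟨_, ⟨a, rfl⟩, _, ⟨c, rfl⟩, hac⟩ := AddSubgroup.mem_sup.mp <|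
    comp_mem_sup_range_const hp hr0 hrp (zmodChar_injective hζ) (fun _ ↦ mem_range_zmodChar hζ)
      (A := (orbitHom p (MulAut.conjNormal g) l).range) (a := orbitHom p _ l (.ofMul a₀))
      (fun _ ⟨a, ha⟩ ↦ ha ▸ ⟨_, (fwdDiff_iter_orbitHom_conjNormal hC g l a.toMul 1).symm⟩)
      ⟨_, rfl⟩ (by rw [fwdDiff_iter_orbitHom_conjNormal hC, ha₀]; exact map_zero _)
      (fun h ↦ ha₀' <| hl <| (fwdDiff_iter_orbitHom_conjNormal hC g l a₀ r).symm.trans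
        (h.trans (map_zero _).symm)) hf
  exact ⟨a.toMul, -c, eq_add_neg_of_add_eq hac⟩

lemma notMem_upperCentralSeries_two_of_orbitHom_eq (hC : C.index = p) {r : ℕ} (hr : 1 < r)
    (hrp : r < p) {ζ : kˣ} (hζ : IsPrimitiveRoot ζ p) {a : C} {c : Additive kˣ}
    (ha : orbitHom p (MulAut.conjNormal g) l (.ofMul a) =
      ((AddChar.zmodChar p hζ.pow_eq_one).toAddMonoidHom ∘ fun i ↦ i ^ r) + fun _ ↦ c) :
    (a : G) ∉ Subgroup.upperCentralSeries G 2 := by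
  set e : ZMod p →+ Additive kˣ := (AddChar.zmodChar p hζ.pow_eq_one).toAddMonoidHom
  intro ha_mem
  have commutator_mem : ⁅g, (a : G)⁆ ∈ center G := by
    rw [← Subgroup.upperCentralSeries_one, ← commutatorElement_inv]
    exact inv_mem (Subgroup.mem_upperCentralSeries_succ_iff.mp ha_mem g)
  have iterate_two : (commutatorHom C g)^[2] a = 1 := Subtype.ext <|
    commutatorElement_eq_one_iff_mul_comm.mpr (mem_center_iff.mp commutator_mem g)
  have iter_comp : (fwdDiff 1)^[2] (e ∘ fun i ↦ i ^ r) = 0 := by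
    rw [← fwdDiff_iter_succ_add_const 1 _ c, ← ha, fwdDiff_iter_orbitHom_conjNormal hC,
      iterate_two, ofMul_one, map_zero]
  have iter_pow : (fwdDiff 1)^[2] (fun i : ZMod p ↦ i ^ r) = 0 := funext fun i ↦
    zmodChar_injective hζ <| (congrFun (fwdDiff_iter_addMonoidHom_comp 1 e _ 2) i).symm.trans <|
      (congrFun iter_comp i).trans (map_zero e).symm
  have factorial_eq_zero : (r.factorial : ZMod p) = 0 := by
    have h := fwdDiff_iter_eq_zero_of_le iter_pow hr
    rw [fwdDiff_iter_eq_factorial] at h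
    simpa using congrFun h 0
  rw [ZMod.natCast_eq_zero_iff, (Fact.out : p.Prime).dvd_factorial] at factorial_eq_zero
  lia

lemma exists_character_eq_zero_notMem_upperCentralSeries_two [Finite G] [Group.IsNilpotent G]
    [IsAlgClosed k] [FiniteDimensional k V] {ρ : Representation k G V} [ρ.IsIrreducible]
    (hinj : Function.Injective ρ) (hC : C.index = p) (hcenter : Nat.card (center G) ≤ p)
    {r : ℕ} (hr : 1 < r) (hrp : r < p) (hr_coprime : r.Coprime (p - 1))
    (hcard : p ^ r < Nat.card C) :
    ∃ a ∈ C, ρ.character a = 0 ∧ a ∉ Subgroup.upperCentralSeries G 2 := by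
  have hp : p.Prime := Fact.out
  have hr0 : r ≠ 0 := by lia
  obtain ⟨g, -, hg⟩ := SetLike.exists_of_lt (lt_top_iff_ne_top.mpr fun h : C = ⊤ ↦
    hp.ne_one (by rw [← hC, h, index_top]))
  have not_le_center : ¬ C ≤ center G := fun h ↦ hcard.not_ge <|
    ((card_le_of_le h).trans hcenter).trans (Nat.le_self_pow hr0 p)
  obtain ⟨x, hxC, hx_center, hx⟩ := exists_forall_commutator_mem not_le_center
  have hgx : ⁅g, x⁆ ∈ center G := commutatorElement_inv x g ▸ inv_mem (hx g)
  have hgx1 : ⁅g, x⁆ ≠ 1 := fun h ↦ hx_center <|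
    mem_center_of_commute (hC ▸ hp) hg hxC (commutatorElement_eq_one_iff_commute.mp h)
  obtain ⟨l, b, hζ, hb⟩ := exists_basis_apply_eq_smul (x := ⟨x, hxC⟩) hC hinj hg hgx hgx1
  obtain ⟨a, c, hac⟩ := exists_orbitHom_eq_zmodChar_comp_add hC hg hcenter hr0 hrp hcard hζ
    (orbitHom_injective_of_basis hinj hb) (fwdDiff_iter_pow_eq_zero_of_lt r.lt_succ_self)
  refine ⟨a, a.2, ?_, notMem_upperCentralSeries_two_of_orbitHom_eq hC hr hrp hζ hac⟩
  have hζ' := IsPrimitiveRoot.coe_units_iff.mpr hζ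
  have weight_eq (i : ZMod p) : (l ((MulAut.conjNormal g ^ i.val) a) : k) =
      AddChar.zmodChar p hζ'.pow_eq_one (i ^ r) * (c.toMul : k) :=
    congrArg (fun u : Additive kˣ ↦ (u.toMul : k)) (congrFun hac i)
  rw [character_eq_sum_of_basis hb, Finset.sum_congr rfl fun i _ ↦ weight_eq i,
    ← Finset.sum_mul, sum_zmodChar_pow_eq_zero hr0 hr_coprime hζ', zero_mul]

end Vanishing

section PGroup

variable {k G V : Type*} [Field k] [Group G] [AddCommGroup V] [Module k V]

open Subgroup
open scoped commutatorElement

lemma card_dvd_ncard_of_mul_mem {H : Subgroup G} {S : Set G}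
    (hS : ∀ g ∈ S, ∀ h ∈ H, g * h ∈ S) : Nat.card H ∣ S.ncard := by
  have preimage_image : ((↑) : G → G ⧸ H) ⁻¹' ((↑) '' S) = S := by
    refine (Set.subset_preimage_image _ S).antisymm' ?_
    rintro g ⟨s, hs, hsg⟩
    simpa using hS s hs _ (QuotientGroup.eq.mp hsg)
  rw [← Nat.card_coe_set_eq, ← preimage_image, QuotientGroup.card_preimage_mk]
  exact dvd_mul_right _ _

lemma card_scalarSubgroup_dvd_ncard (ρ : Representation k G V) :
    Nat.card (scalarSubgroup ρ) ∣ {g | ρ.character g = 0}.ncard := by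
  refine card_dvd_ncard_of_mul_mem fun g (hg : ρ.character g = 0) z hz ↦ ?_
  obtain ⟨c, hc⟩ := mem_scalarSubgroup.mp hz
  have character_mul : ρ.character (g * z) = c * ρ.character g := by
    simp [Representation.character, hc, ← Algebra.commutes, ← Algebra.smul_def]
  exact character_mul.trans (by rw [hg, mul_zero])

lemma character_eq_zero_of_notMem_centralizer {ρ : Representation k G V}
    (hinj : Function.Injective ρ) {x g : G} (hx : ⁅x, g⁆ ∈ scalarSubgroup ρ)
    (hg : g ∉ centralizer {x}) : ρ.character g = 0 :=
  character_eq_zero_of_commutator hinj hx fun h ↦ hg <|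
    mem_centralizer_singleton_iff.mpr (commutatorElement_eq_one_iff_mul_comm.mp h).symm

lemma character_eq_zero_of_mem_upperCentralSeries_two {ρ : Representation k G V}
    (hinj : Function.Injective ρ) (hcenter_le : center G ≤ scalarSubgroup ρ) {y : G}
    (hy : y ∈ Subgroup.upperCentralSeries G 2) (hy_center : y ∉ center G) : ρ.character y = 0 := by
  obtain ⟨g, hg⟩ : ∃ g, g * y ≠ y * g := by simpa [mem_center_iff] using hy_center
  refine character_eq_zero_of_notMem_centralizer hinj (x := g) (hcenter_le ?_)
    (mt mem_centralizer_singleton_iff.mp hg.symm)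
  rw [← Subgroup.upperCentralSeries_one, ← commutatorElement_inv]
  exact inv_mem (Subgroup.mem_upperCentralSeries_succ_iff.mp hy g)

lemma injective_of_scalarSubgroup_eq_center [Group.IsNilpotent G] [IsAlgClosed k]
    [FiniteDimensional k V] {ρ : Representation k G V} [ρ.IsIrreducible]
    (hρ : scalarSubgroup ρ = center G) (hprime : (Nat.card (center G)).Prime)
    (hcenter : center G ≠ ⊤) : Function.Injective ρ := by
  have ker_le : ρ.ker ≤ center G := fun g hg ↦
    hρ ▸ mem_scalarSubgroup.mpr ⟨1, (MonoidHom.mem_ker.mp hg).trans (by simp)⟩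
  refine (MonoidHom.ker_eq_bot_iff ρ).mp ?_
  have : Fact (Nat.card (center G)).Prime := ⟨hprime⟩
  obtain h | h := (ρ.ker.subgroupOf (center G)).eq_bot_or_eq_top_of_prime_card
  · rwa [subgroupOf_eq_bot, disjoint_iff, inf_eq_left.mpr ker_le] at h
  obtain ⟨x, -, hx, hx_comm⟩ :=
    exists_forall_commutator_mem (C := ⊤) (mt top_le_iff.mp hcenter)
  refine absurd (hρ ▸ mem_scalarSubgroup_of_forall_commute fun g ↦ ?_) hx
  have comm_mem : ⁅x, g⁆ ∈ ρ.ker := subgroupOf_eq_top.mp h (hx_comm g)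
  calc ρ x * ρ g = ρ (⁅x, g⁆ * (g * x)) := by
        rw [← map_mul, commutatorElement_def]; group
    _ = ρ g * ρ x := by rw [map_mul, MonoidHom.mem_ker.mp comm_mem, one_mul, map_mul]

lemma center_lt_inf_upperCentralSeries_two {x : G} (hx : x ∉ center G)
    (hx_comm : ∀ g, ⁅x, g⁆ ∈ center G) :
    center G <
      centralizer {x} ⊓ centralizer (centralizer {x}) ⊓ Subgroup.upperCentralSeries G 2 := by
  have center_le : center G ≤ Subgroup.upperCentralSeries G 2 := by
    rw [← Subgroup.upperCentralSeries_one]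
    exact Subgroup.upperCentralSeries_mono G one_le_two
  have x_mem : x ∈ Subgroup.upperCentralSeries G 2 :=
    Subgroup.mem_upperCentralSeries_succ_iff.mpr (by simpa using hx_comm)
  refine SetLike.lt_iff_le_and_exists.mpr
    ⟨le_inf (le_inf (center_le_centralizer _) (center_le_centralizer _)) center_le, x, ?_, hx⟩
  exact mem_inf.mpr ⟨mem_inf.mpr ⟨mem_centralizer_singleton_iff.mpr rfl,
    fun c hc ↦ mem_centralizer_singleton_iff.mp hc⟩, x_mem⟩

variable [Finite G]

lemma mul_card_le_card_of_lt {p : ℕ} [Fact p.Prime] (hG : IsPGroup p G) {H K : Subgroup G}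
    (hHK : H < K) : p * Nat.card H ≤ Nat.card K := by
  obtain ⟨j, hj⟩ := (hG.to_subgroup K).index (H.subgroupOf K)
  have hj0 : j ≠ 0 := by
    rintro rfl
    exact hHK.not_ge (relIndex_eq_one.mp (hj.trans (pow_zero p)))
  rw [← (H.subgroupOf K).index_mul_card, hj, Nat.card_congr (subgroupOfEquivOfLe hHK.le).toEquiv]
  exact Nat.mul_le_mul_right _ (Nat.le_self_pow hj0 p)

lemma ncard_compl_union_sdiff {Z N C : Subgroup G} (hZN : Z ≤ N) (hNC : N ≤ C) :
    ((C : Set G)ᶜ ∪ ((N : Set G) \ Z)).ncard =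
      Nat.card G - Nat.card C + (Nat.card N - Nat.card Z) := by
  have disj : Disjoint (C : Set G)ᶜ ((N : Set G) \ Z) :=
    Set.disjoint_left.mpr fun g hgC hg ↦ hgC (hNC hg.1)
  rw [Set.ncard_union_eq disj, Set.ncard_compl, Set.ncard_sdiff hZN]
  simp only [← Nat.card_coe_set_eq, SetLike.coe_sort_coe]

lemma index_eq_and_forall_mem_of_ncard_eq {p n : ℕ} (hp : p.Prime) (hG : Nat.card G = p ^ n)
    {Z N C : Subgroup G} (hZ : Nat.card Z = p) (hZN : Z < N) (hNC : N ≤ C) (hC : C < ⊤)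
    {S : Set G} (hCS : ∀ g ∉ C, g ∈ S) (hNS : ∀ g ∈ N, g ∉ Z → g ∈ S)
    (hS : S.ncard = p ^ n - p ^ (n - 1) + p ^ 2 - p) :
    C.index = p ∧ ∀ g ∈ C, g ∈ S → g ∈ N := by
  have : Fact p.Prime := ⟨hp⟩
  have hp_group : IsPGroup p G := .of_card hG
  have card_N : p ^ 2 ≤ Nat.card N := by
    simpa [hZ, sq] using mul_card_le_card_of_lt hp_group hZN
  have card_C : p * Nat.card C ≤ p ^ n := by
    simpa [hG] using mul_card_le_card_of_lt hp_group hC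
  have hn : p ^ n = p * p ^ (n - 1) := by
    refine (mul_pow_sub_one ?_ p).symm
    rintro rfl
    nlinarith [hp.one_lt, Nat.card_pos (α := C)]
  have card_C' : Nat.card C ≤ p ^ (n - 1) := Nat.le_of_mul_le_mul_left (hn ▸ card_C) hp.pos
  have union_subset : (C : Set G)ᶜ ∪ ((N : Set G) \ Z) ⊆ S :=
    Set.union_subset hCS fun g hg ↦ hNS g hg.1 hg.2
  have ncard_le := Set.ncard_le_ncard union_subset
  rw [ncard_compl_union_sdiff hZN.le hNC, hG, hZ, hS] at ncard_le
  have hp_sq : p ≤ p ^ 2 := Nat.le_self_pow two_ne_zero p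
  have pow_le : p ^ (n - 1) ≤ p ^ n := Nat.pow_le_pow_right hp.pos (n.sub_le 1)
  have card_C_eq : Nat.card C = p ^ (n - 1) := by lia
  have union_eq := Set.eq_of_subset_of_ncard_le union_subset <| by
    rw [ncard_compl_union_sdiff hZN.le hNC, hG, hZ, hS]
    lia
  constructor
  · refine Nat.eq_of_mul_eq_mul_left (Nat.card_pos (α := C)) ?_
    rw [card_mul_index, hG, hn, card_C_eq, mul_comm]
  · intro g hgC hgS
    exact ((union_eq ▸ hgS).resolve_left fun h ↦ h hgC).1

lemma scalarSubgroup_eq_center_of_sq_not_dvd_ncard [IsAlgClosed k] [FiniteDimensional k V]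
    {ρ : Representation k G V} [ρ.IsIrreducible] {p : ℕ} [Fact p.Prime] (hG : IsPGroup p G)
    [Nontrivial G] (hρ : ¬ p ^ 2 ∣ {g | ρ.character g = 0}.ncard) :
    scalarSubgroup ρ = center G ∧ Nat.card (center G) = p := by
  have card_scalar : Nat.card (scalarSubgroup ρ) ≤ p := by
    obtain ⟨j, hj⟩ := IsPGroup.iff_card.mp (hG.to_subgroup (scalarSubgroup ρ))
    have hj1 : j ≤ 1 := by
      by_contra! hj1
      exact hρ ((pow_dvd_pow p hj1).trans (hj ▸ card_scalarSubgroup_dvd_ncard ρ))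
    rw [hj]
    exact (Nat.pow_le_pow_right (NeZero.pos p) hj1).trans_eq (pow_one p)
  have card_center : p ≤ Nat.card (center G) := by
    simpa using mul_card_le_card_of_lt hG hG.bot_lt_center
  have center_eq := eq_of_le_of_card_ge center_le_scalarSubgroup (card_scalar.trans card_center)
  exact ⟨center_eq.symm, card_center.antisymm' (center_eq ▸ card_scalar)⟩

lemma exists_isMulCommutative_index_eq {ρ : Representation k G V} {p n : ℕ}
    (hp : p.Prime) (hG : Nat.card G = p ^ n) (hinj : Function.Injective ρ)
    (hcenter_le : center G ≤ scalarSubgroup ρ) (hcenter : Nat.card (center G) = p)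
    (htop : center G ≠ ⊤)
    (hz : {g | ρ.character g = 0}.ncard = p ^ n - p ^ (n - 1) + p ^ 2 - p) :
    ∃ C : Subgroup G, C.Normal ∧ IsMulCommutative C ∧ C.index = p ∧
      ∀ a ∈ C, ρ.character a = 0 → a ∈ Subgroup.upperCentralSeries G 2 := by
  have : Fact p.Prime := ⟨hp⟩
  have : Group.IsNilpotent G := (IsPGroup.of_card hG).isNilpotent
  obtain ⟨x, -, hx, hx_comm⟩ := exists_forall_commutator_mem (C := ⊤) (mt top_le_iff.mp htop)
  let C : Subgroup G := centralizer {x}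
  have C_lt_top : C < ⊤ := lt_top_iff_ne_top.mpr fun h ↦ hx <|
    centralizer_eq_top_iff_subset.mp h (Set.mem_singleton x)
  obtain ⟨index_C, zeros_mem⟩ := index_eq_and_forall_mem_of_ncard_eq hp hG hcenter
    (center_lt_inf_upperCentralSeries_two hx hx_comm) (inf_le_left.trans inf_le_left) C_lt_top
    (fun g ↦ character_eq_zero_of_notMem_centralizer hinj (hcenter_le (hx_comm g)))
    (fun g hg ↦ character_eq_zero_of_mem_upperCentralSeries_two hinj hcenter_le hg.2) hz
  have C_normal : C.Normal := normal_of_index_eq_minFac_card <| by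
    rw [index_C, hG, hp.pow_minFac]
    rintro rfl
    have : Subsingleton G := (Nat.card_eq_one_iff_unique.mp (by rw [hG, pow_zero])).1
    exact htop (Subsingleton.elim _ _)
  have C_comm : C ≤ centralizer C := by
    by_contra hC
    obtain ⟨y, hy, c, hc, hyc, hyc1⟩ := exists_commutator_mem_center hC
    have c_mem := zeros_mem c hc (character_eq_zero_of_commutator hinj (hcenter_le hyc) hyc1)
    exact hyc1 (commutatorElement_eq_one_iff_mul_comm.mpr (c_mem.1.2 y hy))
  exact ⟨C, C_normal, le_centralizer_iff_isMulCommutative.mp C_comm, index_C,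
    fun a haC ha ↦ (zeros_mem a haC ha).2⟩

theorem stmt10_general [IsAlgClosed k] [FiniteDimensional k V] (ρ : Representation k G V)
    [ρ.IsIrreducible] {p n r : ℕ} (hp : p.Prime) (hG : Nat.card G = p ^ n) (hr : 1 < r)
    (hrp : r < p) (hr_coprime : r.Coprime (p - 1))
    (hz : {g | ρ.character g = 0}.ncard = p ^ n - p ^ (n - 1) + p ^ 2 - p) :
    Nat.card G ≤ p ^ (r + 1) := by
  rw [hG]
  refine Nat.pow_le_pow_right hp.pos ?_
  by_contra! hn
  have : Fact p.Prime := ⟨hp⟩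
  have hp_group : IsPGroup p G := .of_card hG
  have : Nontrivial G := hp_group.nontrivial_iff_card.mpr ⟨n, by lia, hG⟩
  have : Group.IsNilpotent G := hp_group.isNilpotent
  obtain ⟨scalar_eq, card_center⟩ := scalarSubgroup_eq_center_of_sq_not_dvd_ncard (ρ := ρ) hp_group
    (hz ▸ sq_not_dvd_pow_sub_pow_add_sq_sub hp (by lia))
  have center_ne_top : center G ≠ ⊤ := fun h ↦ by
    rw [h, card_top, hG, Nat.pow_eq_self_iff hp.one_lt] at card_center
    lia
  have hinj := injective_of_scalarSubgroup_eq_center scalar_eq (card_center ▸ hp) center_ne_top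
  obtain ⟨C, _, _, index_C, zeros_mem⟩ :=
    exists_isMulCommutative_index_eq hp hG hinj scalar_eq.ge card_center center_ne_top hz
  have card_C : p ^ r < Nat.card C := by
    refine Nat.lt_of_mul_lt_mul_right (a := p) ?_
    calc p ^ r * p = p ^ (r + 1) := (pow_succ p r).symm
      _ < p ^ n := Nat.pow_lt_pow_right hp.one_lt hn
      _ = Nat.card C * p := by rw [← hG, ← C.card_mul_index, index_C]
  obtain ⟨a, haC, ha, ha_notMem⟩ := exists_character_eq_zero_notMem_upperCentralSeries_two hinj
    index_C card_center.le hr hrp hr_coprime card_C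
  exact ha_notMem (zeros_mem a haC ha)

end PGroup

/-- Let `p > 3` be a prime and `G` a `p`-group of order `p^n` having a
non-linear irreducible complex character vanishing at exactly `p^n - p^(n-1) + p^2 - p`
elements. Then `|G| ≤ p^(r+1)`, where `r` is the smallest prime not dividing `p - 1`. -/
theorem stmt10 {G : Type} [Group G] [Fintype G] {p n r : ℕ} (hp : p.Prime) (hp3 : 3 < p)
    (hG : Fintype.card G = p ^ n)
    (hr : r.Prime ∧ ¬ r ∣ p - 1 ∧ ∀ q : ℕ, q.Prime → ¬ q ∣ p - 1 → r ≤ q)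
    (V : FDRep ℂ G) (hV : Simple V)
    (hnl : 1 < Module.finrank ℂ V)
    (hz : {g : G | V.character g = 0}.ncard = p ^ n - p ^ (n - 1) + p ^ 2 - p) :
    Fintype.card G ≤ p ^ (r + 1) := by
  have := isIrreducible_of_simple V
  rw [← Nat.card_eq_fintype_card] at hG ⊢
  exact stmt10_general V.ρ hp hG hr.1.one_lt (lt_of_forall_prime_not_dvd_sub_one_le hp3 hr.2.2)
    (hr.1.coprime_iff_not_dvd.mpr hr.2.1) hz
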